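/- arXiv:1909.09744 — 2 statements merged into one kernel-verified Lean document; each statement's English description precedes it below -/
import Mathlib

section
/- Let (𝒟^-, 𝒟^+, ζ) be a random vector with 𝒟^-, 𝒟^+ ∈ ℕ, |ζ| ≤ 1 almost surely, and 0 < E[𝒟^+] < ∞. Suppose P(𝒟^- > x) ∈ RV(−α) for some α > 1, and P(𝒟^- /(𝒟^+ ∨ 1) > x) = o(P(𝒟^- > x)) as x → ∞. Then E[1(ζ·𝒟^- /(𝒟^+ ∨ 1) > x)·𝒟^+] = o(E[𝒟^+]·P(𝒟^- > x)) as x → ∞; that is, for the size-biased vector (𝒩, 𝒞) with P(𝒩·𝒞 > x) = E[1(ζ·𝒟^- /(𝒟^+ ∨ 1) > x)·𝒟^+]/E[𝒟^+] arising from the directed configuration model, P(𝒞·𝒩 > x) = o(P(𝒩₀ > x)) where 𝒩₀ has the distribution of 𝒟^-. -/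
open MeasureTheory ProbabilityTheory Filter Asymptotics Set

/-- The (real-valued) tail probability `P(X > x)`. -/
noncomputable def tailP {Ω : Type*} [MeasurableSpace Ω] (μ : Measure Ω) (X : Ω → ℝ) (x : ℝ) : ℝ :=
  (μ {ω | X ω > x}).toReal

/-- `f` is a regularly varying tail with index `-α`. -/
def RVtail (f : ℝ → ℝ) (α : ℝ) : Prop :=
  ∀ lam : ℝ, 0 < lam →
    Tendsto (fun x => f (lam * x) / f x) atTop (nhds (lam ^ (-α)))

/-!
Write `N` and `W` for the in- and out-degree. Since `ζ ≤ 1`, it suffices to bound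
`E[W; N / (W ∨ 1) > x]`, which we split at `W = b`. The part with `W ≤ b` is at most
`b P(N / (W ∨ 1) > x)`, negligible by hypothesis. On the part with `W > b`, the event `N / W > x`
forces both `W < N / x` and `N > b x`, so this part is at most `x⁻¹ E[N; N > b x]`. A Karamata bound
`E[N; N > y] ≤ C y P(N > y)`, obtained by cutting `{N > y}` along a geometric scale, turns it into
`C b P(N > b x)`. This is asymptotic to `C b ^ (1 - α) P(N > x)`, and `b ^ (1 - α)` is as small as
desired because `α > 1`.
-/

lemma RVtail.eventually_ne_zero {f : ℝ → ℝ} {α : ℝ} (hf : RVtail f α) :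
    ∀ᶠ x in atTop, f x ≠ 0 := by
  have hlim : Tendsto (fun x => f x / f x) atTop (nhds 1) := by simpa using hf 1 one_pos
  filter_upwards [hlim.eventually_ne one_ne_zero] with x hx hfx
  simp [hfx] at hx

lemma RVtail.exists_one_lt_eventually_mul_le {f : ℝ → ℝ} {α : ℝ} (hf : RVtail f α) (hα : 1 < α)
    (hf0 : ∀ x, 0 ≤ f x) {ε : ℝ} (hε : 0 < ε) :
    ∃ b, 1 < b ∧ ∀ᶠ x in atTop, b * f (b * x) ≤ ε * f x := by
  have hsmall : ∀ᶠ b : ℝ in atTop, b ^ (-(α - 1)) < ε :=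
    (tendsto_rpow_neg_atTop (sub_pos.2 hα)).eventually_lt_const hε
  obtain ⟨b, hbε, hb⟩ := (hsmall.and (eventually_gt_atTop 1)).exists
  have hb0 : 0 < b := one_pos.trans hb
  have hlim : b ^ (-α) < ε / b := by
    rwa [lt_div_iff₀ hb0, ← Real.rpow_add_one hb0.ne', neg_add_eq_sub, ← neg_sub]
  refine ⟨b, hb, ?_⟩
  filter_upwards [(hf b hb0).eventually_lt_const hlim, hf.eventually_ne_zero] with x hx hfx
  have hfx0 : 0 < f x := (hf0 x).lt_of_ne' hfx
  rw [div_lt_div_iff₀ hfx0 hb0] at hx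
  linarith

lemma eventually_forall_pow_mul_le {R : Type*} [CommSemiring R] [LinearOrder R]
    [IsStrictOrderedRing R] {f : R → R} {b q : R} (hb : 1 ≤ b) (hq : 0 ≤ q)
    (hf : ∀ᶠ x in atTop, b * f (b * x) ≤ q * f x) :
    ∀ᶠ x in atTop, ∀ j : ℕ, b ^ j * f (b ^ j * x) ≤ q ^ j * f x := by
  obtain ⟨x₀, hx₀⟩ := eventually_atTop.1 hf
  filter_upwards [eventually_ge_atTop x₀, eventually_ge_atTop 0] with x hx hx0 j
  induction j with
  | zero => simp
  | succ j ih =>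
    have hle : x₀ ≤ b ^ j * x := hx.trans (le_mul_of_one_le_left hx0 (one_le_pow₀ hb))
    calc b ^ (j + 1) * f (b ^ (j + 1) * x) = b ^ j * (b * f (b * (b ^ j * x))) := by
          rw [pow_succ', mul_assoc b, mul_left_comm, mul_assoc]
      _ ≤ b ^ j * (q * f (b ^ j * x)) :=
          mul_le_mul_of_nonneg_left (hx₀ _ hle) (by positivity)
      _ = q * (b ^ j * f (b ^ j * x)) := mul_left_comm _ _ _
      _ ≤ q * (q ^ j * f x) := by gcongr
      _ = q ^ (j + 1) * f x := by rw [pow_succ', mul_assoc]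

lemma exists_pow_mul_lt_and_le_pow_succ_mul {K : Type*} [Field K] [LinearOrder K]
    [IsStrictOrderedRing K] [Archimedean K] {b y t : K} (hb : 1 < b) (hy : 0 < y) (ht : y < t) :
    ∃ j : ℕ, b ^ j * y < t ∧ t ≤ b ^ (j + 1) * y := by
  have hex : ∃ n : ℕ, t ≤ b ^ n * y := by
    obtain ⟨n, hn⟩ := pow_unbounded_of_one_lt (t / y) hb
    exact ⟨n, ((div_lt_iff₀ hy).1 hn).le⟩
  obtain ⟨j, hj⟩ : ∃ j, Nat.find hex = j + 1 :=
    Nat.exists_eq_succ_of_ne_zero fun h => by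
      simpa [h, ht.not_ge] using Nat.find_spec hex
  exact ⟨j, not_le.1 (Nat.find_min hex (by omega)), hj ▸ Nat.find_spec hex⟩

section TailBounds

variable {Ω : Type*} [MeasurableSpace Ω] {μ : Measure Ω}

lemma tailP_nonneg (X : Ω → ℝ) (x : ℝ) : 0 ≤ tailP μ X x := ENNReal.toReal_nonneg

lemma ofReal_tailP [IsFiniteMeasure μ] (X : Ω → ℝ) (x : ℝ) :
    ENNReal.ofReal (tailP μ X x) = μ {ω | x < X ω} :=
  ENNReal.ofReal_toReal (measure_ne_top _ _)

lemma setLIntegral_le_const_mul {f : Ω → ENNReal} {s : Set Ω} {c : ENNReal}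
    (hf : ∀ ω ∈ s, f ω ≤ c) : ∫⁻ ω in s, f ω ∂μ ≤ c * μ s :=
  (setLIntegral_mono measurable_const hf).trans_eq (setLIntegral_const s c)

lemma setLIntegral_lt_le_tsum_tailP [IsFiniteMeasure μ] (N : Ω → ℝ) {b y : ℝ} (hb : 1 < b)
    (hy : 0 < y) :
    ∫⁻ ω in {ω | y < N ω}, ENNReal.ofReal (N ω) ∂μ ≤
      ∑' j : ℕ, ENNReal.ofReal (b ^ (j + 1) * y * tailP μ N (b ^ j * y)) := by
  have : 0 < b := one_pos.trans hb
  let layer (j : ℕ) : Set Ω := {ω | b ^ j * y < N ω ∧ N ω ≤ b ^ (j + 1) * y}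
  have hcover : {ω | y < N ω} ⊆ ⋃ j, layer j := fun ω hω =>
    mem_iUnion.2 (exists_pow_mul_lt_and_le_pow_succ_mul hb hy hω)
  have hlayer (j : ℕ) : ∫⁻ ω in layer j, ENNReal.ofReal (N ω) ∂μ ≤
      ENNReal.ofReal (b ^ (j + 1) * y * tailP μ N (b ^ j * y)) := by
    rw [ENNReal.ofReal_mul (by positivity), ofReal_tailP]
    exact (setLIntegral_le_const_mul fun ω hω => ENNReal.ofReal_le_ofReal hω.2).trans
      (mul_le_mul_right (measure_mono fun ω hω => hω.1) _)
  calc ∫⁻ ω in {ω | y < N ω}, ENNReal.ofReal (N ω) ∂μ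
      ≤ ∫⁻ ω in ⋃ j, layer j, ENNReal.ofReal (N ω) ∂μ := lintegral_mono_set hcover
    _ ≤ ∑' j, ∫⁻ ω in layer j, ENNReal.ofReal (N ω) ∂μ := lintegral_iUnion_le _ _
    _ ≤ _ := ENNReal.tsum_le_tsum hlayer

lemma RVtail.exists_eventually_setLIntegral_le [IsFiniteMeasure μ] {N : Ω → ℝ} {α : ℝ}
    (hN : RVtail (tailP μ N) α) (hα : 1 < α) :
    ∃ C, 0 < C ∧ ∀ᶠ y in atTop, ∫⁻ ω in {ω | y < N ω}, ENNReal.ofReal (N ω) ∂μ ≤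
      ENNReal.ofReal (C * (y * tailP μ N y)) := by
  obtain ⟨b, hb, hdecay⟩ :=
    hN.exists_one_lt_eventually_mul_le hα (tailP_nonneg N) (one_half_pos (α := ℝ))
  have : 0 < b := one_pos.trans hb
  refine ⟨b * 2, by positivity, ?_⟩
  filter_upwards [eventually_forall_pow_mul_le hb.le one_half_pos.le hdecay,
    eventually_gt_atTop 0] with y hdecay hy
  have hF : 0 ≤ tailP μ N y := tailP_nonneg N y
  have hterm (j : ℕ) : b ^ (j + 1) * y * tailP μ N (b ^ j * y) ≤
      b * (y * tailP μ N y) * (1 / 2) ^ j :=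
    calc b ^ (j + 1) * y * tailP μ N (b ^ j * y)
        = b * y * (b ^ j * tailP μ N (b ^ j * y)) := by ring
      _ ≤ b * y * ((1 / 2) ^ j * tailP μ N y) :=
          mul_le_mul_of_nonneg_left (hdecay j) (by positivity)
      _ = b * (y * tailP μ N y) * (1 / 2) ^ j := by ring
  calc ∫⁻ ω in {ω | y < N ω}, ENNReal.ofReal (N ω) ∂μ
      ≤ ∑' j : ℕ, ENNReal.ofReal (b ^ (j + 1) * y * tailP μ N (b ^ j * y)) :=
        setLIntegral_lt_le_tsum_tailP N hb hy
    _ ≤ ∑' j : ℕ, ENNReal.ofReal (b * (y * tailP μ N y) * (1 / 2) ^ j) :=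
        ENNReal.tsum_le_tsum fun j => ENNReal.ofReal_le_ofReal (hterm j)
    _ = ENNReal.ofReal (b * 2 * (y * tailP μ N y)) := by
        rw [← ENNReal.ofReal_tsum_of_nonneg (fun j => by positivity)
          (summable_geometric_two.mul_left _), tsum_mul_left, tsum_geometric_two, mul_right_comm]

lemma setLIntegral_lt_div_max_one_le {N W : Ω → ℝ} (hN : AEMeasurable N μ) {b x : ℝ} (hb : 1 ≤ b)
    (hx : 0 < x) :
    ∫⁻ ω in {ω | x < N ω / max (W ω) 1}, ENNReal.ofReal (W ω) ∂μ ≤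
      ENNReal.ofReal b * μ {ω | x < N ω / max (W ω) 1} +
        ENNReal.ofReal x⁻¹ * ∫⁻ ω in {ω | b * x < N ω}, ENNReal.ofReal (N ω) ∂μ := by
  set A := {ω | x < N ω / max (W ω) 1}
  have hlarge : ∀ ω ∈ A ∩ {ω | b < W ω}, x * W ω < N ω := by
    rintro ω ⟨hA, hW : b < W ω⟩
    have hW1 : 1 ≤ W ω := hb.trans hW.le
    rwa [mem_ofPred_eq, max_eq_left hW1, lt_div_iff₀ (one_pos.trans_le hW1)] at hA
  have hcover : A ⊆ A ∩ {ω | W ω ≤ b} ∪ A ∩ {ω | b < W ω} := fun ω hω =>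
    (le_or_gt (W ω) b).imp (⟨hω, ·⟩) (⟨hω, ·⟩)
  calc ∫⁻ ω in A, ENNReal.ofReal (W ω) ∂μ
      ≤ ∫⁻ ω in A ∩ {ω | W ω ≤ b} ∪ A ∩ {ω | b < W ω}, ENNReal.ofReal (W ω) ∂μ :=
        lintegral_mono_set hcover
    _ ≤ ∫⁻ ω in A ∩ {ω | W ω ≤ b}, ENNReal.ofReal (W ω) ∂μ +
          ∫⁻ ω in A ∩ {ω | b < W ω}, ENNReal.ofReal (W ω) ∂μ := lintegral_union_le _ _ _
    _ ≤ _ := add_le_add ?_ ?_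
  · exact (setLIntegral_le_const_mul fun ω hω => ENNReal.ofReal_le_ofReal hω.2).trans
      (mul_le_mul_right (measure_mono inter_subset_left) _)
  · rw [← lintegral_const_mul' _ _ ENNReal.ofReal_ne_top]
    refine (setLIntegral_mono_ae (hN.ennreal_ofReal.const_mul _).restrict
      (ae_of_all _ fun ω hω => ?_)).trans (lintegral_mono_set fun ω hω => ?_)
    · rw [← ENNReal.ofReal_mul (by positivity)]
      exact ENNReal.ofReal_le_ofReal ((le_inv_mul_iff₀ hx).2 (hlarge ω hω).le)
    · calc b * x < W ω * x := mul_lt_mul_of_pos_right hω.2 hx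
        _ = x * W ω := mul_comm _ _
        _ < N ω := hlarge ω hω

lemma RVtail.eventually_setLIntegral_lt_div_max_one_le [IsFiniteMeasure μ] {N W : Ω → ℝ} {α : ℝ}
    (hRV : RVtail (tailP μ N) α) (hα : 1 < α) (hN : AEMeasurable N μ)
    (ho : tailP μ (fun ω => N ω / max (W ω) 1) =o[atTop] tailP μ N) {c : ℝ} (hc : 0 < c) :
    ∀ᶠ x in atTop, ∫⁻ ω in {ω | x < N ω / max (W ω) 1}, ENNReal.ofReal (W ω) ∂μ ≤
      ENNReal.ofReal (c * tailP μ N x) := by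
  obtain ⟨C, hC, hKaramata⟩ := hRV.exists_eventually_setLIntegral_le hα
  obtain ⟨b, hb, hscale⟩ := hRV.exists_one_lt_eventually_mul_le hα (tailP_nonneg N)
    (show 0 < c / 2 / C by positivity)
  have hb0 : 0 < b := one_pos.trans hb
  filter_upwards [(tendsto_id.const_mul_atTop hb0).eventually hKaramata, hscale,
    ho.def (show 0 < c / 2 / b by positivity), eventually_gt_atTop 0] with x hK hs hr hx
  simp only [id_eq] at hK
  have hratio : b * tailP μ (fun ω => N ω / max (W ω) 1) x ≤ c / 2 * tailP μ N x := by
    rw [Real.norm_of_nonneg (tailP_nonneg _ x), Real.norm_of_nonneg (tailP_nonneg _ x)] at hr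
    rwa [div_mul_eq_mul_div, le_div_iff₀' hb0] at hr
  have htail : x⁻¹ * (C * (b * x * tailP μ N (b * x))) ≤ c / 2 * tailP μ N x := by
    rw [div_mul_eq_mul_div, le_div_iff₀' hC] at hs
    calc x⁻¹ * (C * (b * x * tailP μ N (b * x))) = C * (b * tailP μ N (b * x)) := by field_simp
      _ ≤ c / 2 * tailP μ N x := hs
  have hF : 0 ≤ c / 2 * tailP μ N x := mul_nonneg (by positivity) (tailP_nonneg N x)
  calc _ ≤ _ := setLIntegral_lt_div_max_one_le hN hb.le hx
    _ ≤ ENNReal.ofReal b * ENNReal.ofReal (tailP μ (fun ω => N ω / max (W ω) 1) x) +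
          ENNReal.ofReal x⁻¹ * ENNReal.ofReal (C * (b * x * tailP μ N (b * x))) := by
        rw [ofReal_tailP]
        gcongr
    _ ≤ ENNReal.ofReal (c / 2 * tailP μ N x) + ENNReal.ofReal (c / 2 * tailP μ N x) := by
        rw [← ENNReal.ofReal_mul hb0.le, ← ENNReal.ofReal_mul (by positivity)]
        exact add_le_add (ENNReal.ofReal_le_ofReal hratio) (ENNReal.ofReal_le_ofReal htail)
    _ = ENNReal.ofReal (c * tailP μ N x) := by
        rw [← ENNReal.ofReal_add hF hF, ← add_mul, add_halves]

lemma integrable_and_integral_le_of_lintegral_ofReal_le {f : Ω → ℝ} (hf : AEStronglyMeasurable f μ)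
    (hf0 : 0 ≤ᵐ[μ] f) {B : ℝ} (hB : 0 ≤ B)
    (hle : ∫⁻ ω, ENNReal.ofReal (f ω) ∂μ ≤ ENNReal.ofReal B) :
    Integrable f μ ∧ ∫ ω, f ω ∂μ ≤ B := by
  refine ⟨(lintegral_ofReal_ne_top_iff_integrable hf hf0).1
    (hle.trans_lt ENNReal.ofReal_lt_top).ne, ?_⟩
  rw [integral_eq_lintegral_of_nonneg_ae hf0 hf]
  exact ENNReal.toReal_le_of_le_ofReal hB hle

end TailBounds

/-- The integrability clause rules out that the integral is small only because the Bochner integral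
of a non-integrable function is `0`. -/
theorem dcm_size_biased_NC_negligible_general
    {Ω : Type*} [MeasurableSpace Ω] (μ : Measure Ω) [IsFiniteMeasure μ] {N W ζ : Ω → ℝ}
    (hN : AEMeasurable N μ) (hW : AEMeasurable W μ)
    (hN0 : 0 ≤ᵐ[μ] N) (hW0 : 0 ≤ᵐ[μ] W) (hζ1 : ∀ᵐ ω ∂μ, ζ ω ≤ 1)
    {α : ℝ} (hα : 1 < α) (hRV : RVtail (tailP μ N) α)
    (ho : tailP μ (fun ω => N ω / max (W ω) 1) =o[atTop] tailP μ N) :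
    (∀ᶠ x in atTop, IntegrableOn W {ω | x < ζ ω * N ω / max (W ω) 1} μ) ∧
      (fun x => ∫ ω in {ω | x < ζ ω * N ω / max (W ω) 1}, W ω ∂μ) =o[atTop] tailP μ N := by
  have hsub (x : ℝ) :
      {ω | x < ζ ω * N ω / max (W ω) 1} ≤ᵐ[μ] {ω | x < N ω / max (W ω) 1} := by
    filter_upwards [hN0, hζ1] with ω hNω hζω hω
    refine lt_of_lt_of_le (show x < _ from hω) ?_
    gcongr
    exact mul_le_of_le_one_left hNω hζω
  have hbound {c : ℝ} (hc : 0 < c) : ∀ᶠ x in atTop,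
      IntegrableOn W {ω | x < ζ ω * N ω / max (W ω) 1} μ ∧
        ∫ ω in {ω | x < ζ ω * N ω / max (W ω) 1}, W ω ∂μ ≤ c * tailP μ N x := by
    filter_upwards [hRV.eventually_setLIntegral_lt_div_max_one_le hα hN ho hc] with x hx
    exact integrable_and_integral_le_of_lintegral_ofReal_le hW.aestronglyMeasurable.restrict
      (ae_restrict_of_ae hW0) (mul_nonneg hc.le (tailP_nonneg N x))
      ((lintegral_mono_set' (hsub x)).trans hx)
  refine ⟨(hbound one_pos).mono fun x hx => hx.1, isLittleO_iff.2 fun c hc => ?_⟩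
  filter_upwards [hbound hc] with x hx
  rw [Real.norm_of_nonneg (tailP_nonneg N x),
    Real.norm_of_nonneg (integral_nonneg_of_ae (ae_restrict_of_ae hW0))]
  exact hx.2

/-- Example 4.4 of the paper, DCM, in-degree case: if
`P(𝒟⁻ > x) ∈ RV(−α)` and `P(𝒟⁻/(𝒟⁺ ∨ 1) > x) = o(P(𝒟⁻ > x))`, then the size-biased
tail of the directed configuration model satisfies
`E[1(ζ 𝒟⁻/(𝒟⁺ ∨ 1) > x) 𝒟⁺] = o(E[𝒟⁺] P(𝒟⁻ > x))`, i.e. `P(𝒞𝒩 > x) = o(P(𝒩₀ > x))`. -/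
theorem dcm_size_biased_NC_negligible
    {Ω : Type*} [MeasurableSpace Ω] (μ : Measure Ω) [IsProbabilityMeasure μ]
    (Dm Dp : Ω → ℕ) (ζ : Ω → ℝ)
    (hDm : Measurable Dm) (hDp : Measurable Dp) (hζ : Measurable ζ)
    (hζbd : ∀ᵐ ω ∂μ, |ζ ω| ≤ 1)
    (hDpInt : Integrable (fun ω => (Dp ω : ℝ)) μ)
    (hDpPos : 0 < ∫ ω, (Dp ω : ℝ) ∂μ)
    (α : ℝ) (hα : 1 < α)
    (hRV : RVtail (tailP μ (fun ω => (Dm ω : ℝ))) α)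
    (ho : (fun x => tailP μ (fun ω => (Dm ω : ℝ) / ((max (Dp ω) 1 : ℕ) : ℝ)) x)
      =o[atTop] fun x => tailP μ (fun ω => (Dm ω : ℝ)) x) :
    (fun x => ∫ ω, Set.indicator
        {ω' | ζ ω' * (Dm ω' : ℝ) / ((max (Dp ω') 1 : ℕ) : ℝ) > x}
        (fun ω' => (Dp ω' : ℝ)) ω ∂μ)
      =o[atTop] fun x => (∫ ω, (Dp ω : ℝ) ∂μ) * tailP μ (fun ω => (Dm ω : ℝ)) x := by
  simp only [gt_iff_lt, Nat.cast_max, Nat.cast_one, integral_indicator (measurableSet_lt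
    measurable_const (by fun_prop : Measurable fun ω => ζ ω * Dm ω / max (Dp ω : ℝ) 1))] at ho ⊢
  exact (dcm_size_biased_NC_negligible_general μ (by fun_prop) (by fun_prop)
    (ae_of_all _ fun ω => Nat.cast_nonneg _) (ae_of_all _ fun ω => Nat.cast_nonneg _)
    (hζbd.mono fun ω => le_of_abs_le) hα hRV ho).2.const_mul_right hDpPos.ne'
end

section
/- Let (W^-, W^+, ζ) be a random vector with W^-, W^+ ≥ 0 almost surely, 0 < E[W^-] < ∞, 0 < E[W^+] < ∞, and |ζ| ≤ c almost surely for some c ∈ (0,1]; set θ := E[W^- + W^+]. Let Z^- and Z^+ be ℕ-valued random variables that are conditionally independent given (W^-, W^+, ζ), with conditional distributions Poisson with means E[W^+]·W^- /θ and E[W^-]·W^+/θ, respectively. Then E[Z^- · (|ζ|/(Z^+ + 1)) · W^+] = (E[W^+]/E[W^-]) · E[|ζ|·W^-·(1 − e^{−E[W^-]·W^+/θ})] ≤ c·E[W^+]. In particular, for the size-biased vector (𝒩, 𝒞) of the inhomogeneous random digraph one has E[𝒩·|𝒞|] = E[Z^-·(|ζ|/(Z^++1))·W^+]/E[W^+]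 ≤ c. -/
/-!
The pointwise fact is that independent Poisson variables `Z⁻`, `Z⁺` of means `a`, `b` satisfy
`E[Z⁻] = a` and `E[b / (Z⁺ + 1)] = 1 - e⁻ᵇ`, the latter because the factor `b / (n + 1)` turns the
mass at `n` into the mass at `n + 1`. Conditioning on `(W⁻, W⁺, ζ)`, the factor `W⁺` is
proportional to the mean of `Z⁺`, which turns `E[Z⁻ |ζ| W⁺ / (Z⁺ + 1)]` into the right-hand side.
All terms are nonnegative, so Tonelli lets the sum over the values of `(Z⁻, Z⁺)` pass through the
integral. The bound follows from `1 - e⁻ˣ ≤ 1` and `|ζ| ≤ c`.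
-/

open MeasureTheory ProbabilityTheory Filter Set

/-- Poisson probability mass function with (real) mean `lam`. -/
noncomputable def poissonPdf (lam : ℝ) (n : ℕ) : ℝ :=
  Real.exp (-lam) * lam ^ n / (n.factorial : ℝ)

section Poisson

variable {lam a b : ℝ}

lemma poissonPdf_nonneg (h : 0 ≤ lam) (n : ℕ) : 0 ≤ poissonPdf lam n := by
  unfold poissonPdf
  positivity

@[fun_prop]
lemma measurable_poissonPdf (n : ℕ) : Measurable fun lam => poissonPdf lam n := by
  unfold poissonPdf
  fun_prop

lemma poissonPdf_zero (lam : ℝ) : poissonPdf lam 0 = Real.exp (-lam) := by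
  simp [poissonPdf]

lemma poissonPdf_succ_mul (lam : ℝ) (n : ℕ) :
    poissonPdf lam (n + 1) * ((n : ℝ) + 1) = lam * poissonPdf lam n := by
  unfold poissonPdf
  rw [Nat.factorial_succ]
  push_cast
  field_simp
  ring

lemma hasSum_poissonPdf (lam : ℝ) : HasSum (poissonPdf lam) 1 := by
  have h := (NormedSpace.expSeries_div_hasSum_exp lam).mul_left (Real.exp (-lam))
  rw [← Real.exp_eq_exp_ℝ, ← Real.exp_add, neg_add_cancel, Real.exp_zero] at h
  exact h.congr_fun fun n => mul_div_assoc _ _ _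

lemma poissonPdf_le_one (h : 0 ≤ lam) (n : ℕ) : poissonPdf lam n ≤ 1 :=
  le_hasSum (hasSum_poissonPdf lam) n fun k _ => poissonPdf_nonneg h k

lemma hasSum_poissonPdf_mul_natCast (lam : ℝ) :
    HasSum (fun n : ℕ => poissonPdf lam n * n) lam := by
  rw [← hasSum_nat_add_iff' 1]
  simpa [poissonPdf_succ_mul] using (hasSum_poissonPdf lam).mul_left lam

lemma hasSum_poissonPdf_mul_div_succ (lam : ℝ) :
    HasSum (fun n : ℕ => poissonPdf lam n * (lam / ((n : ℝ) + 1))) (1 - Real.exp (-lam)) := by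
  have h_tail : HasSum (fun n => poissonPdf lam (n + 1)) (1 - Real.exp (-lam)) := by
    simpa [poissonPdf_zero] using (hasSum_nat_add_iff' 1).2 (hasSum_poissonPdf lam)
  refine h_tail.congr_fun fun n => ?_
  rw [mul_div_left_comm, mul_comm, div_mul_eq_mul_div, div_eq_iff (by positivity),
    mul_comm _ lam, poissonPdf_succ_mul]

lemma hasSum_poissonPdf_prod_mul_div_succ (ha : 0 ≤ a) (hb : 0 ≤ b) (t : ℝ) :
    HasSum (fun k : ℕ × ℕ => poissonPdf a k.1 * poissonPdf b k.2
      * (k.1 * (t / ((k.2 : ℝ) + 1)) * b)) (t * a * (1 - Real.exp (-b))) := by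
  have h_fst := hasSum_poissonPdf_mul_natCast a
  have h_snd := hasSum_poissonPdf_mul_div_succ b
  have h_summable := h_fst.summable.mul_of_nonneg h_snd.summable
    (fun n => mul_nonneg (poissonPdf_nonneg ha n) n.cast_nonneg)
    (fun n => mul_nonneg (poissonPdf_nonneg hb n) (by positivity))
  rw [mul_assoc]
  refine ((h_fst.mul h_snd h_summable).mul_left t).congr_fun fun k => ?_
  ring

end Poisson

section ConditionalMassFunction

variable {Ω α κ : Type*} [MeasurableSpace Ω] [MeasurableSpace α] {μ : Measure Ω}
  {Z : Ω → κ} {V : Ω → α} {p : κ → α → ℝ}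

/-- `p k v` is a version of the conditional probability `P(Z = k | V = v)` of the discrete random
variable `Z`. This is encoded by the defining property of conditional probabilities on the events
`{V ∈ s}`, which generate `σ(V)`; integrability is a field because the Bochner integral of a
nonintegrable function is `0`. -/
structure IsCondMassFunction (μ : Measure Ω) (Z : Ω → κ) (V : Ω → α) (p : κ → α → ℝ) :
    Prop where
  nonneg : ∀ k, ∀ᵐ ω ∂μ, 0 ≤ p k (V ω)
  integrable : ∀ k, Integrable (fun ω => p k (V ω)) μ
  measureReal_inter : ∀ k s, MeasurableSet s →
    μ.real (Z ⁻¹' {k} ∩ V ⁻¹' s) = ∫ ω in V ⁻¹' s, p k (V ω) ∂μ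

namespace IsCondMassFunction

lemma map_restrict_eq_map_withDensity [IsFiniteMeasure μ] (h : IsCondMassFunction μ Z V p)
    (hV : Measurable V) (k : κ) :
    (μ.restrict (Z ⁻¹' {k})).map V
      = (μ.withDensity fun ω => ENNReal.ofReal (p k (V ω))).map V := by
  ext s hs
  rw [Measure.map_apply hV hs, Measure.map_apply hV hs, Measure.restrict_apply (hV hs),
    withDensity_apply _ (hV hs), inter_comm,
    ← ofReal_integral_eq_lintegral_ofReal (h.integrable k).integrableOn
      (ae_restrict_of_ae (h.nonneg k)),
    ← h.measureReal_inter k s hs, ofReal_measureReal]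

lemma setLIntegral_fiber_comp [IsFiniteMeasure μ] (h : IsCondMassFunction μ Z V p)
    (hV : Measurable V) (k : κ) {g : α → ENNReal} (hg : Measurable g) :
    ∫⁻ ω in Z ⁻¹' {k}, g (V ω) ∂μ = ∫⁻ ω, ENNReal.ofReal (p k (V ω)) * g (V ω) ∂μ := by
  rw [← lintegral_map hg hV, h.map_restrict_eq_map_withDensity hV k, lintegral_map hg hV]
  exact lintegral_withDensity_eq_lintegral_mul₀
    (h.integrable k).aemeasurable.ennreal_ofReal (hg.comp hV).aemeasurable

variable [Countable κ] [MeasurableSpace κ] [MeasurableSingletonClass κ]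

theorem lintegral_comp_eq_lintegral_tsum [IsFiniteMeasure μ] (h : IsCondMassFunction μ Z V p)
    (hZ : Measurable Z) (hV : Measurable V) {g : κ → α → ENNReal} (hg : ∀ k, Measurable (g k)) :
    ∫⁻ ω, g (Z ω) (V ω) ∂μ = ∫⁻ ω, ∑' k, ENNReal.ofReal (p k (V ω)) * g k (V ω) ∂μ := by
  have h_meas : ∀ k, MeasurableSet (Z ⁻¹' {k}) := fun k => hZ (measurableSet_singleton k)
  calc ∫⁻ ω, g (Z ω) (V ω) ∂μ
      = ∑' k, ∫⁻ ω in Z ⁻¹' {k}, g (Z ω) (V ω) ∂μ := by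
        rw [← lintegral_iUnion h_meas (pairwise_disjoint_fiber Z), ← preimage_iUnion,
          iUnion_of_singleton, preimage_univ, setLIntegral_univ]
    _ = ∑' k, ∫⁻ ω in Z ⁻¹' {k}, g k (V ω) ∂μ :=
        tsum_congr fun k => setLIntegral_congr_fun (h_meas k) fun ω hω => by
          rw [mem_singleton_iff.1 hω]
    _ = ∑' k, ∫⁻ ω, ENNReal.ofReal (p k (V ω)) * g k (V ω) ∂μ :=
        tsum_congr fun k => h.setLIntegral_fiber_comp hV k (hg k)
    _ = ∫⁻ ω, ∑' k, ENNReal.ofReal (p k (V ω)) * g k (V ω) ∂μ :=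
        (lintegral_tsum fun k => (h.integrable k).aemeasurable.ennreal_ofReal.mul
          ((hg k).comp hV).aemeasurable).symm

theorem integral_comp_eq_of_hasSum [IsFiniteMeasure μ] (h : IsCondMassFunction μ Z V p)
    (hZ : Measurable Z) (hV : Measurable V) {G : κ → α → ℝ} (hG : ∀ k, Measurable (G k))
    (hG_nonneg : ∀ᵐ ω ∂μ, ∀ k, 0 ≤ G k (V ω)) {F : α → ℝ} (hF : Measurable F)
    (hF_sum : ∀ᵐ ω ∂μ, HasSum (fun k => p k (V ω) * G k (V ω)) (F (V ω))) :
    ∫ ω, G (Z ω) (V ω) ∂μ = ∫ ω, F (V ω) ∂μ := by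
  have hp_nonneg : ∀ᵐ ω ∂μ, ∀ k, 0 ≤ p k (V ω) := ae_all_iff.2 h.nonneg
  have hG_meas : Measurable fun ω => G (Z ω) (V ω) :=
    have hG_uncurry : Measurable (Function.uncurry G) := measurable_from_prod_countable_right hG
    hG_uncurry.comp (hZ.prodMk hV)
  have hF_nonneg : ∀ᵐ ω ∂μ, 0 ≤ F (V ω) := by
    filter_upwards [hp_nonneg, hG_nonneg, hF_sum] with ω hp hGω hFω
    exact hFω.nonneg fun k => mul_nonneg (hp k) (hGω k)
  rw [integral_eq_lintegral_of_nonneg_ae (hG_nonneg.mono fun ω hω => hω (Z ω))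
      hG_meas.aestronglyMeasurable,
    integral_eq_lintegral_of_nonneg_ae hF_nonneg (hF.comp hV).aestronglyMeasurable,
    h.lintegral_comp_eq_lintegral_tsum hZ hV (g := fun k v => ENNReal.ofReal (G k v))
      fun k => (hG k).ennreal_ofReal]
  congr 1
  refine lintegral_congr_ae ?_
  filter_upwards [hp_nonneg, hG_nonneg, hF_sum] with ω hp hGω hFω
  simp_rw [← ENNReal.ofReal_mul (hp _)]
  rw [← ENNReal.ofReal_tsum_of_nonneg (fun k => mul_nonneg (hp k) (hGω k)) hFω.summable,
    hFω.tsum_eq]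

end IsCondMassFunction

end ConditionalMassFunction

section ConditionalPoisson

variable {Ω α : Type*} [MeasurableSpace Ω] [MeasurableSpace α] {μ : Measure Ω}
  [IsFiniteMeasure μ] {Zm Zp : Ω → ℕ} {V : Ω → α} {X Y t : α → ℝ}

lemma isCondMassFunction_poissonPdf_prod (hV : Measurable V) (hX : Measurable X)
    (hY : Measurable Y) (hX_nonneg : ∀ᵐ ω ∂μ, 0 ≤ X (V ω)) (hY_nonneg : ∀ᵐ ω ∂μ, 0 ≤ Y (V ω))
    (h : ∀ (m n : ℕ) (s : Set α), MeasurableSet s →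
      (μ {ω | Zm ω = m ∧ Zp ω = n ∧ V ω ∈ s}).toReal
        = ∫ ω in {ω | V ω ∈ s}, poissonPdf (X (V ω)) m * poissonPdf (Y (V ω)) n ∂μ) :
    IsCondMassFunction μ (fun ω => (Zm ω, Zp ω)) V
      (fun k v => poissonPdf (X v) k.1 * poissonPdf (Y v) k.2) where
  nonneg k := by
    filter_upwards [hX_nonneg, hY_nonneg] with ω hXω hYω
    exact mul_nonneg (poissonPdf_nonneg hXω _) (poissonPdf_nonneg hYω _)
  integrable k := by
    refine Integrable.of_bound (Measurable.aestronglyMeasurable (by fun_prop)) 1 ?_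
    filter_upwards [hX_nonneg, hY_nonneg] with ω hXω hYω
    rw [Real.norm_of_nonneg (mul_nonneg (poissonPdf_nonneg hXω _) (poissonPdf_nonneg hYω _))]
    exact mul_le_one₀ (poissonPdf_le_one hXω _) (poissonPdf_nonneg hYω _)
      (poissonPdf_le_one hYω _)
  measureReal_inter k s hs := by
    have h_event : (fun ω => (Zm ω, Zp ω)) ⁻¹' {k} ∩ V ⁻¹' s
        = {ω | Zm ω = k.1 ∧ Zp ω = k.2 ∧ V ω ∈ s} := by
      ext ω
      simp [Prod.ext_iff, and_assoc]
    rw [h_event]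
    exact h k.1 k.2 s hs

theorem integral_mul_div_succ_mul_of_isCondMassFunction_poissonPdf
    (h : IsCondMassFunction μ (fun ω => (Zm ω, Zp ω)) V
      (fun k v => poissonPdf (X v) k.1 * poissonPdf (Y v) k.2))
    (hZm : Measurable Zm) (hZp : Measurable Zp) (hV : Measurable V)
    (hX : Measurable X) (hY : Measurable Y) (ht : Measurable t)
    (hX_nonneg : ∀ᵐ ω ∂μ, 0 ≤ X (V ω)) (hY_nonneg : ∀ᵐ ω ∂μ, 0 ≤ Y (V ω))
    (ht_nonneg : ∀ᵐ ω ∂μ, 0 ≤ t (V ω)) :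
    ∫ ω, (Zm ω : ℝ) * (t (V ω) / ((Zp ω : ℝ) + 1)) * Y (V ω) ∂μ
      = ∫ ω, t (V ω) * X (V ω) * (1 - Real.exp (-Y (V ω))) ∂μ := by
  refine h.integral_comp_eq_of_hasSum (hZm.prodMk hZp) hV
    (G := fun k v => k.1 * (t v / ((k.2 : ℝ) + 1)) * Y v) (fun k => by fun_prop) ?_
    (F := fun v => t v * X v * (1 - Real.exp (-Y v))) (by fun_prop) ?_
  · filter_upwards [hY_nonneg, ht_nonneg] with ω hYω htω k
    positivity
  · filter_upwards [hX_nonneg, hY_nonneg] with ω hXω hYω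
    exact hasSum_poissonPdf_prod_mul_div_succ hXω hYω (t (V ω))

end ConditionalPoisson

lemma integral_mul_mul_one_sub_exp_neg_le {Ω : Type*} [MeasurableSpace Ω] {μ : Measure Ω}
    {t X Y : Ω → ℝ} {c : ℝ} (hX : Integrable X μ) (hX_nonneg : ∀ᵐ ω ∂μ, 0 ≤ X ω)
    (hY_nonneg : ∀ᵐ ω ∂μ, 0 ≤ Y ω) (ht_nonneg : ∀ᵐ ω ∂μ, 0 ≤ t ω) (ht_le : ∀ᵐ ω ∂μ, t ω ≤ c) :
    ∫ ω, t ω * X ω * (1 - Real.exp (-Y ω)) ∂μ ≤ c * ∫ ω, X ω ∂μ := by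
  rw [← integral_const_mul]
  refine integral_mono_of_nonneg ?_ (hX.const_mul c) ?_
  · filter_upwards [hX_nonneg, hY_nonneg, ht_nonneg] with ω hXω hYω htω
    have h_exp : Real.exp (-Y ω) ≤ 1 := Real.exp_le_one_iff.2 (neg_nonpos.2 hYω)
    exact mul_nonneg (mul_nonneg htω hXω) (sub_nonneg.2 h_exp)
  · filter_upwards [hX_nonneg, ht_nonneg, ht_le] with ω hXω htω htcω
    calc t ω * X ω * (1 - Real.exp (-Y ω))
        ≤ t ω * X ω := mul_le_of_le_one_right (mul_nonneg htω hXω)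
          (sub_le_self _ (Real.exp_pos _).le)
      _ ≤ c * X ω := by gcongr

theorem ird_size_biased_mean_identity_general
    {Ω : Type*} [MeasurableSpace Ω] (μ : Measure Ω) [IsFiniteMeasure μ]
    (Wm Wp ζ : Ω → ℝ) (Zm Zp : Ω → ℕ)
    (hWm : Measurable Wm) (hWp : Measurable Wp) (hζ : Measurable ζ)
    (hZm : Measurable Zm) (hZp : Measurable Zp)
    (hWm0 : ∀ᵐ ω ∂μ, 0 ≤ Wm ω) (hWp0 : ∀ᵐ ω ∂μ, 0 ≤ Wp ω)
    (hWmInt : Integrable Wm μ)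
    (hWmPos : 0 < ∫ ω, Wm ω ∂μ) (hWpPos : 0 < ∫ ω, Wp ω ∂μ)
    (c : ℝ) (hζbd : ∀ᵐ ω ∂μ, |ζ ω| ≤ c) (θ : ℝ) (hθ : 0 < θ)
    (hcond : ∀ (m n : ℕ) (s : Set (ℝ × ℝ × ℝ)), MeasurableSet s →
      (μ {ω | Zm ω = m ∧ Zp ω = n ∧ (Wm ω, Wp ω, ζ ω) ∈ s}).toReal
        = ∫ ω in {ω | (Wm ω, Wp ω, ζ ω) ∈ s},
            poissonPdf ((∫ ω', Wp ω' ∂μ) * Wm ω / θ) m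
              * poissonPdf ((∫ ω', Wm ω' ∂μ) * Wp ω / θ) n ∂μ) :
    (∫ ω, (Zm ω : ℝ) * (|ζ ω| / ((Zp ω : ℝ) + 1)) * Wp ω ∂μ)
        = (∫ ω, Wp ω ∂μ) / (∫ ω, Wm ω ∂μ)
          * ∫ ω, |ζ ω| * Wm ω * (1 - Real.exp (-((∫ ω', Wm ω' ∂μ) * Wp ω / θ))) ∂μ ∧
    (∫ ω, (Zm ω : ℝ) * (|ζ ω| / ((Zp ω : ℝ) + 1)) * Wp ω ∂μ) ≤ c * ∫ ω, Wp ω ∂μ ∧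
    (∫ ω, (Zm ω : ℝ) * (|ζ ω| / ((Zp ω : ℝ) + 1)) * Wp ω ∂μ) / (∫ ω, Wp ω ∂μ) ≤ c := by
  set p := ∫ ω, Wp ω ∂μ
  set q := ∫ ω, Wm ω ∂μ
  have hX_nonneg : ∀ᵐ ω ∂μ, 0 ≤ p * Wm ω / θ := hWm0.mono fun ω hω => by positivity
  have hY_nonneg : ∀ᵐ ω ∂μ, 0 ≤ q * Wp ω / θ := hWp0.mono fun ω hω => by positivity
  have hζ_nonneg : ∀ᵐ ω ∂μ, 0 ≤ |ζ ω| := .of_forall fun ω => abs_nonneg (ζ ω)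
  have h_rescaled : ∫ ω, (Zm ω : ℝ) * (|ζ ω| / ((Zp ω : ℝ) + 1)) * (q * Wp ω / θ) ∂μ
      = ∫ ω, |ζ ω| * (p * Wm ω / θ) * (1 - Real.exp (-(q * Wp ω / θ))) ∂μ := by
    have hV : Measurable fun ω => (Wm ω, Wp ω, ζ ω) := by fun_prop
    have hX : Measurable fun v : ℝ × ℝ × ℝ => p * v.1 / θ := by fun_prop
    have hY : Measurable fun v : ℝ × ℝ × ℝ => q * v.2.1 / θ := by fun_prop
    have ht : Measurable fun v : ℝ × ℝ × ℝ => |v.2.2| := by fun_prop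
    exact integral_mul_div_succ_mul_of_isCondMassFunction_poissonPdf
      (isCondMassFunction_poissonPdf_prod hV hX hY hX_nonneg hY_nonneg hcond)
      hZm hZp hV hX hY ht hX_nonneg hY_nonneg hζ_nonneg
  have h_identity : ∫ ω, (Zm ω : ℝ) * (|ζ ω| / ((Zp ω : ℝ) + 1)) * Wp ω ∂μ
      = p / q * ∫ ω, |ζ ω| * Wm ω * (1 - Real.exp (-(q * Wp ω / θ))) ∂μ := by
    calc ∫ ω, (Zm ω : ℝ) * (|ζ ω| / ((Zp ω : ℝ) + 1)) * Wp ω ∂μ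
        = θ / q * ∫ ω, (Zm ω : ℝ) * (|ζ ω| / ((Zp ω : ℝ) + 1)) * (q * Wp ω / θ) ∂μ := by
          rw [← integral_const_mul]
          refine integral_congr_ae (.of_forall fun ω => ?_)
          field_simp
      _ = p / q * ∫ ω, |ζ ω| * Wm ω * (1 - Real.exp (-(q * Wp ω / θ))) ∂μ := by
          rw [h_rescaled, ← integral_const_mul, ← integral_const_mul]
          refine integral_congr_ae (.of_forall fun ω => ?_)
          field_simp
  have h_le : ∫ ω, (Zm ω : ℝ) * (|ζ ω| / ((Zp ω : ℝ) + 1)) * Wp ω ∂μ ≤ c * p := by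
    calc ∫ ω, (Zm ω : ℝ) * (|ζ ω| / ((Zp ω : ℝ) + 1)) * Wp ω ∂μ
        = p / q * ∫ ω, |ζ ω| * Wm ω * (1 - Real.exp (-(q * Wp ω / θ))) ∂μ := h_identity
      _ ≤ p / q * (c * q) := by
          gcongr
          exact integral_mul_mul_one_sub_exp_neg_le hWmInt hWm0 hY_nonneg hζ_nonneg hζbd
      _ = c * p := by field_simp
  exact ⟨h_identity, h_le, (div_le_iff₀ hWpPos).2 h_le⟩

/-- moment identity from the proof of Lemma 6.4 of the paper, IRD
case: if `Z⁻, Z⁺` are conditionally independent Poisson with means `E[W⁺]W⁻/θ` and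
`E[W⁻]W⁺/θ` given `(W⁻, W⁺, ζ)`, where `θ = E[W⁻ + W⁺]` and `|ζ| ≤ c ≤ 1`, then
`E[Z⁻ (|ζ|/(Z⁺+1)) W⁺] = (E[W⁺]/E[W⁻]) E[|ζ| W⁻ (1 − e^{−E[W⁻]W⁺/θ})] ≤ c E[W⁺]`;
in particular the size-biased vector `(𝒩, 𝒞)` of the IRD satisfies `E[𝒩|𝒞|] ≤ c`. -/
theorem ird_size_biased_mean_identity
    {Ω : Type*} [MeasurableSpace Ω] (μ : Measure Ω) [IsProbabilityMeasure μ]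
    (Wm Wp ζ : Ω → ℝ) (Zm Zp : Ω → ℕ)
    (hWm : Measurable Wm) (hWp : Measurable Wp) (hζ : Measurable ζ)
    (hZm : Measurable Zm) (hZp : Measurable Zp)
    (hWm0 : ∀ᵐ ω ∂μ, 0 ≤ Wm ω) (hWp0 : ∀ᵐ ω ∂μ, 0 ≤ Wp ω)
    (hWmInt : Integrable Wm μ) (hWpInt : Integrable Wp μ)
    (hWmPos : 0 < ∫ ω, Wm ω ∂μ) (hWpPos : 0 < ∫ ω, Wp ω ∂μ)
    (c : ℝ) (hc0 : 0 < c) (hc1 : c ≤ 1)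
    (hζbd : ∀ᵐ ω ∂μ, |ζ ω| ≤ c)
    (θ : ℝ) (hθ : θ = ∫ ω, (Wm ω + Wp ω) ∂μ)
    -- `Z⁻` and `Z⁺` are conditionally independent Poisson given `(W⁻, W⁺, ζ)`
    (hcond : ∀ (m n : ℕ) (s : Set (ℝ × ℝ × ℝ)), MeasurableSet s →
      (μ {ω | Zm ω = m ∧ Zp ω = n ∧ (Wm ω, Wp ω, ζ ω) ∈ s}).toReal
        = ∫ ω in {ω | (Wm ω, Wp ω, ζ ω) ∈ s},
            poissonPdf ((∫ ω', Wp ω' ∂μ) * Wm ω / θ) m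
              * poissonPdf ((∫ ω', Wm ω' ∂μ) * Wp ω / θ) n ∂μ) :
    (∫ ω, (Zm ω : ℝ) * (|ζ ω| / ((Zp ω : ℝ) + 1)) * Wp ω ∂μ)
        = (∫ ω, Wp ω ∂μ) / (∫ ω, Wm ω ∂μ)
          * ∫ ω, |ζ ω| * Wm ω * (1 - Real.exp (-((∫ ω', Wm ω' ∂μ) * Wp ω / θ))) ∂μ ∧
    (∫ ω, (Zm ω : ℝ) * (|ζ ω| / ((Zp ω : ℝ) + 1)) * Wp ω ∂μ) ≤ c * ∫ ω, Wp ω ∂μ ∧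
    (∫ ω, (Zm ω : ℝ) * (|ζ ω| / ((Zp ω : ℝ) + 1)) * Wp ω ∂μ) / (∫ ω, Wp ω ∂μ) ≤ c := by
  have hθ_pos : 0 < θ := by rw [hθ, integral_add hWmInt hWpInt]; positivity
  exact ird_size_biased_mean_identity_general μ Wm Wp ζ Zm Zp hWm hWp hζ hZm hZp hWm0 hWp0
    hWmInt hWmPos hWpPos c hζbd θ hθ_pos hcond
end
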